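/- arXiv:2506.22319 — 3 statements merged into one kernel-verified Lean document; each statement's English description precedes it below -/
import Mathlib

section
/- Let G be the subgroup of GL(3,ℝ) generated by the six matrices D_x, D_y, D_z, S_xy, S_yz, S_zx, let p₀ = (1,2,3) ∈ ℝ³, and let Q be a real symmetric 3×3 matrix. If there is a constant c ∈ ℝ such that (A p₀) · Q (A p₀) = c ‖p₀‖² for every A ∈ G, then Q = c · I. (Equivalently, the linear system obtained by evaluating the quadratic form of an unknown symmetric matrix on the 48-point orbit of (1,2,3) under the cubic symmetry group has rank 6, so its unique solution is the scalar matrix c I.) -/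
open Matrix

/-- `D_x = diag(-1,1,1)` -/
def Dx : Matrix (Fin 3) (Fin 3) ℝ := !![-1, 0, 0; 0, 1, 0; 0, 0, 1]
/-- `D_y = diag(1,-1,1)` -/
def Dy : Matrix (Fin 3) (Fin 3) ℝ := !![1, 0, 0; 0, -1, 0; 0, 0, 1]
/-- `D_z = diag(1,1,-1)` -/
def Dz : Matrix (Fin 3) (Fin 3) ℝ := !![1, 0, 0; 0, 1, 0; 0, 0, -1]
/-- `S_xy` exchanges coordinates 1 and 2 -/
def Sxy : Matrix (Fin 3) (Fin 3) ℝ := !![0, 1, 0; 1, 0, 0; 0, 0, 1]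
/-- `S_yz` exchanges coordinates 2 and 3 -/
def Syz : Matrix (Fin 3) (Fin 3) ℝ := !![1, 0, 0; 0, 0, 1; 0, 1, 0]
/-- `S_zx` exchanges coordinates 3 and 1 -/
def Szx : Matrix (Fin 3) (Fin 3) ℝ := !![0, 0, 1; 0, 1, 0; 1, 0, 0]

/-- The point `p₀ = (1,2,3)`. -/
def p₀ : Fin 3 → ℝ := ![1, 2, 3]

/-- The cubic symmetry group: the subgroup of invertible `3 × 3` real matrices generated by
the six matrices `D_x, D_y, D_z, S_xy, S_yz, S_zx`. -/
def cubicGroup : Subgroup (Matrix (Fin 3) (Fin 3) ℝ)ˣ :=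
  Subgroup.closure
    {A : (Matrix (Fin 3) (Fin 3) ℝ)ˣ |
      (A : Matrix (Fin 3) (Fin 3) ℝ) ∈ ({Dx, Dy, Dz, Sxy, Syz, Szx} :
        Set (Matrix (Fin 3) (Fin 3) ℝ))}

/-!
Flipping the sign of one coordinate subtracts a multiple of a basis vector, so a quadratic form that
is constant on the orbit of `p` has vanishing second difference along `2 pᵢ eᵢ` and `2 pⱼ eⱼ`. For
symmetric `Q` this second difference is `8 pᵢ pⱼ Qᵢⱼ`, whence `Q` is diagonal. Swapping two
coordinates then changes the form by `(Qᵢᵢ - Qⱼⱼ) (pⱼ² - pᵢ²)`, whence the diagonal is constant.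
-/

section Orbit

variable {ι R : Type*} [Fintype ι] [CommRing R]

lemma dotProduct_mulVec_second_difference (Q : Matrix ι ι R) (v x y : ι → R) :
    (v - x - y) ⬝ᵥ (Q *ᵥ (v - x - y)) - (v - x) ⬝ᵥ (Q *ᵥ (v - x)) - (v - y) ⬝ᵥ (Q *ᵥ (v - y))
      + v ⬝ᵥ (Q *ᵥ v) = x ⬝ᵥ (Q *ᵥ y) + y ⬝ᵥ (Q *ᵥ x) := by
  simp only [mulVec_sub, sub_dotProduct, dotProduct_sub]
  ring

variable [DecidableEq ι]

variable (R) in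
/-- The reflection in the `i`-th coordinate hyperplane, as an element of `GL ι R`. These reflections
generalize `D_x, D_y, D_z` to arbitrary dimension. -/
@[simps val]
def signFlip (i : ι) : GL ι R where
  val := diagonal (Function.update 1 i (-1))
  inv := diagonal (Function.update 1 i (-1))
  val_inv := by simp [← Pi.mul_def, ← Function.update_mul]
  inv_val := by simp [← Pi.mul_def, ← Function.update_mul]

lemma signFlip_mulVec (i : ι) (v : ι → R) :
    (signFlip R i : Matrix ι ι R) *ᵥ v = v - Pi.single i (2 * v i) := by
  ext k
  obtain rfl | hki := eq_or_ne k i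
  · simp only [val_signFlip, mulVec_diagonal, Function.update_self, Pi.sub_apply, Pi.single_eq_same]
    ring
  · simp [mulVec_diagonal, hki]

lemma diagonal_quadratic_form_comp_swap_sub (d v : ι → R) {i j : ι} (hij : i ≠ j) :
    (v ∘ Equiv.swap i j) ⬝ᵥ (diagonal d *ᵥ (v ∘ Equiv.swap i j)) - v ⬝ᵥ (diagonal d *ᵥ v)
      = (d i - d j) * (v j ^ 2 - v i ^ 2) := by
  simp only [dotProduct, mulVec_diagonal, Function.comp_apply, ← Finset.sum_sub_distrib]
  rw [Finset.sum_eq_add i j hij]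
  · simp only [Equiv.swap_apply_left, Equiv.swap_apply_right]
    ring
  · rintro k - ⟨hki, hkj⟩
    rw [Equiv.swap_apply_of_ne_of_ne hki hkj, sub_self]
  all_goals simp

variable [NoZeroDivisors R] {G : Subgroup (GL ι R)} {Q : Matrix ι ι R} {p : ι → R} {k : R}

lemma isDiag_of_orbit_quadratic_form (hQ : Q.IsSymm) (hflip : ∀ i, signFlip R i ∈ G)
    (h2 : (2 : R) ≠ 0) (hp : ∀ i, p i ≠ 0)
    (h : ∀ A ∈ G, ((A : Matrix ι ι R) *ᵥ p) ⬝ᵥ (Q *ᵥ ((A : Matrix ι ι R) *ᵥ p)) = k) :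
    Q.IsDiag := by
  intro i j hij
  have form_single (a b : ι) (s t : R) :
      Pi.single a s ⬝ᵥ (Q *ᵥ Pi.single b t) = s * t * Q a b := by
    simp [mulVec_single, mul_assoc, mul_comm t]
  have flip_one (a : ι) := h _ (hflip a)
  have flip_two := h _ (mul_mem (hflip j) (hflip i))
  have flip_none := h _ (one_mem G)
  simp only [signFlip_mulVec] at flip_one
  simp only [Units.val_mul, ← mulVec_mulVec, signFlip_mulVec, Pi.sub_apply,
    Pi.single_eq_of_ne hij.symm, sub_zero] at flip_two
  simp only [Units.val_one, one_mulVec] at flip_none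
  have second_difference :=
    dotProduct_mulVec_second_difference Q p (Pi.single i (2 * p i)) (Pi.single j (2 * p j))
  rw [flip_two, flip_one, flip_one, flip_none, form_single, form_single, hQ.apply i j]
    at second_difference
  have entry_mul : 2 ^ 3 * p i * p j * Q i j = 0 := by linear_combination -second_difference
  simpa [h2, hp] using entry_mul

lemma diagonal_apply_eq_of_orbit_quadratic_form {d : ι → R} {i j : ι}
    (hswap : GeneralLinearGroup.swap R i j ∈ G) (hij : p i ^ 2 ≠ p j ^ 2)
    (h : ∀ A ∈ G, ((A : Matrix ι ι R) *ᵥ p) ⬝ᵥ (diagonal d *ᵥ ((A : Matrix ι ι R) *ᵥ p)) = k) :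
    d i = d j := by
  have swapped := h _ hswap
  have unswapped := h _ (one_mem G)
  rw [GeneralLinearGroup.val_swap, swap_mulVec] at swapped
  rw [Units.val_one, one_mulVec] at unswapped
  have difference := diagonal_quadratic_form_comp_swap_sub d p (i := i) (j := j)
    (ne_of_apply_ne (p · ^ 2) hij)
  rw [swapped, unswapped, sub_self] at difference
  exact sub_eq_zero.1 <|
    (mul_eq_zero.1 difference.symm).resolve_right (sub_ne_zero.2 hij.symm)

theorem symm_matrix_eq_smul_one_of_orbit_quadratic_form_general {c : R} (hQ : Q.IsSymm)
    (hflip : ∀ i, signFlip R i ∈ G) (hswap : Pairwise fun i j => GeneralLinearGroup.swap R i j ∈ G)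
    (h2 : (2 : R) ≠ 0) (hp : ∀ i, p i ≠ 0) (hp_sq : Function.Injective fun i => p i ^ 2)
    (hpp : p ⬝ᵥ p ≠ 0)
    (h : ∀ A ∈ G,
      ((A : Matrix ι ι R) *ᵥ p) ⬝ᵥ (Q *ᵥ ((A : Matrix ι ι R) *ᵥ p)) = c * (p ⬝ᵥ p)) :
    Q = c • (1 : Matrix ι ι R) := by
  obtain ⟨d, rfl⟩ : ∃ d, Q = diagonal d :=
    ⟨Q.diag, (isDiag_of_orbit_quadratic_form hQ hflip h2 hp h).diagonal_diag.symm⟩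
  have diagonal_eq (i j : ι) : d i = d j := by
    obtain rfl | hij := eq_or_ne i j
    · rfl
    · exact diagonal_apply_eq_of_orbit_quadratic_form (hswap hij) (hp_sq.ne hij) h
  have diagonal_eq_smul (i : ι) : diagonal d = d i • (1 : Matrix ι ι R) := by
    rw [smul_one_eq_diagonal, funext fun j => diagonal_eq j i]
  have diagonal_entry (i : ι) : d i = c := by
    have form_eq := h 1 (one_mem G)
    rw [Units.val_one, one_mulVec, diagonal_eq_smul i, smul_mulVec, one_mulVec,
      dotProduct_smul, smul_eq_mul] at form_eq
    exact mul_right_cancel₀ hpp form_eq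
  rw [smul_one_eq_diagonal, funext diagonal_entry]

end Orbit

lemma signFlip_mem_cubicGroup (i : Fin 3) : signFlip ℝ i ∈ cubicGroup := by
  have val_eq : (signFlip ℝ i : Matrix (Fin 3) (Fin 3) ℝ) = ![Dx, Dy, Dz] i := by
    ext a b
    fin_cases i <;> fin_cases a <;> fin_cases b <;> simp [Dx, Dy, Dz]
  refine Subgroup.subset_closure ?_
  rw [Set.mem_ofPred_eq, val_eq]
  fin_cases i <;> simp

lemma swap_add_one_mem_cubicGroup (i : Fin 3) :
    GeneralLinearGroup.swap ℝ i (i + 1) ∈ cubicGroup := by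
  have val_eq : Matrix.swap ℝ i (i + 1) = ![Sxy, Syz, Szx] i := by
    ext a b
    fin_cases i <;> fin_cases a <;> fin_cases b <;>
      simp [Matrix.swap, Sxy, Syz, Szx, Equiv.swap_apply_def]
  refine Subgroup.subset_closure ?_
  rw [Set.mem_ofPred_eq, GeneralLinearGroup.val_swap, val_eq]
  fin_cases i <;> simp

lemma swap_mem_cubicGroup :
    Pairwise fun i j : Fin 3 => GeneralLinearGroup.swap ℝ i j ∈ cubicGroup := by
  intro i j hij
  obtain rfl | rfl : j = i + 1 ∨ i = j + 1 := by lia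
  · exact swap_add_one_mem_cubicGroup i
  · have swap_comm : GeneralLinearGroup.swap ℝ (j + 1) j = GeneralLinearGroup.swap ℝ j (j + 1) :=
      Units.ext (Matrix.swap_comm _ _)
    exact swap_comm ▸ swap_add_one_mem_cubicGroup j

lemma p₀_apply_ne_zero (i : Fin 3) : p₀ i ≠ 0 := by
  fin_cases i <;> simp [p₀]

lemma p₀_apply_sq_injective : Function.Injective fun i => p₀ i ^ 2 := by
  intro i j
  fin_cases i <;> fin_cases j <;> norm_num [p₀]

lemma p₀_dotProduct_self : p₀ ⬝ᵥ p₀ = 14 := by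
  norm_num [p₀]

/-- If a real symmetric `3 × 3` matrix `Q` satisfies `(A p₀) ⬝ Q (A p₀) = c ‖p₀‖²` for every
element `A` of the cubic symmetry group, where `p₀ = (1,2,3)`, then `Q = c • I`. -/
theorem symm_matrix_eq_smul_one_of_orbit_quadratic_form
    (Q : Matrix (Fin 3) (Fin 3) ℝ) (hQ : Q.IsSymm) (c : ℝ)
    (h : ∀ A ∈ cubicGroup,
      ((A : Matrix (Fin 3) (Fin 3) ℝ) *ᵥ p₀) ⬝ᵥ (Q *ᵥ ((A : Matrix (Fin 3) (Fin 3) ℝ) *ᵥ p₀))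
        = c * (p₀ ⬝ᵥ p₀)) :
    Q = c • (1 : Matrix (Fin 3) (Fin 3) ℝ) := by
  exact symm_matrix_eq_smul_one_of_orbit_quadratic_form_general hQ signFlip_mem_cubicGroup
    swap_mem_cubicGroup two_ne_zero p₀_apply_ne_zero p₀_apply_sq_injective
    (by norm_num [p₀_dotProduct_self]) h
end

section
/- Let R : ℝ → ℝ be twice continuously differentiable, 2-periodic (R(x+2) = R(x) for all x), and strictly positive. Define c₃ = 2·(∫_{−1}^{1} √(1+R'(x)²)/R(x) dx)⁻¹ and s(x) = ∫_{1}^{x} (c₃·√(1+R'(ζ)²)/R(ζ) − 1) dζ. Then s is 2-periodic and satisfies the differential equation s''(x) + w(x)·s'(x) + w(x) = 0 for all x, where w(x) = R'(x)·(1 − R(x)R''(x) + R'(x)²) / (R(x)·(1 + R'(x)²)). -/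
open MeasureTheory intervalIntegral

/-!
The induced metric is `(1 + R'²) dx² + R² dθ² = R² ((f dx)² + dθ²)` with `f = √(1 + R'²) / R`, so
`∫ f` is an isothermal coordinate, hence harmonic. Logarithmic differentiation gives `f' = -w f`.
The equation `s'' + w s' + w = 0` says that `1 + s'` satisfies the same first-order linear equation
as `f`, so `s' = c f - 1` solves it for every constant `c`. The antiderivative `s` is periodic
exactly when `c f - 1` has mean zero over a period, and this is what determines `c`.
-/

section PeriodicAntiderivative

theorem periodic_integral_of_integral_eq_zero {E : Type*} [NormedAddCommGroup E] [NormedSpace ℝ E]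
    {g : ℝ → E} {T a : ℝ} (hg : Function.Periodic g T)
    (hint : ∀ t₁ t₂, IntervalIntegrable g volume t₁ t₂)
    (hmean : ∫ x in a..a + T, g x = 0) (x₀ : ℝ) :
    Function.Periodic (fun x => ∫ t in x₀..x, g t) T := fun x => by
  simp only [hg.intervalIntegral_add_eq_add x₀ x hint, hg.intervalIntegral_add_eq x₀ a, hmean,
    add_zero]

theorem integral_mul_inv_integral_mul_sub_one {f : ℝ → ℝ} {a b : ℝ}
    (hf : IntervalIntegrable f volume a b) (hne : ∫ x in a..b, f x ≠ 0) :
    ∫ x in a..b, ((b - a) * (∫ t in a..b, f t)⁻¹ * f x - 1) = 0 := by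
  rw [integral_sub (hf.const_mul _) intervalIntegrable_const,
    intervalIntegral.integral_const_mul, intervalIntegral.integral_const,
    inv_mul_cancel_right₀ hne, smul_eq_mul, mul_one, sub_self]

theorem periodic_deriv {𝕜 F : Type*} [NontriviallyNormedField 𝕜] [NormedAddCommGroup F]
    [NormedSpace 𝕜 F] {f : 𝕜 → F} {T : 𝕜} (hf : Function.Periodic f T) :
    Function.Periodic (deriv f) T := fun x => by
  rw [← deriv_comp_add_const, hf.funext]

end PeriodicAntiderivative

theorem deriv_deriv_integral_add_mul_deriv_add_eq_zero {f w : ℝ → ℝ}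
    (hf : ∀ x, HasDerivAt f (-(w x * f x)) x) (c x₀ x : ℝ) :
    deriv (deriv fun y => ∫ t in x₀..y, (c * f t - 1)) x +
      w x * deriv (fun y => ∫ t in x₀..y, (c * f t - 1)) x + w x = 0 := by
  have hcont : Continuous fun t => c * f t - 1 :=
    ((continuous_iff_continuousAt.2 fun t => (hf t).continuousAt).const_mul c).sub continuous_const
  have hderiv : (deriv fun y => ∫ t in x₀..y, (c * f t - 1)) = fun y => c * f y - 1 :=
    funext fun y => (hcont.integral_hasStrictDerivAt x₀ y).hasDerivAt.deriv
  rw [hderiv, (((hf x).const_mul c).sub_const 1).deriv]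
  ring

theorem hasDerivAt_sqrt_one_add_sq {g : ℝ → ℝ} {g' x : ℝ} (hg : HasDerivAt g g' x) :
    HasDerivAt (fun y => √(1 + g y ^ 2)) (g x * g' / √(1 + g x ^ 2)) x := by
  have hpos : 0 < 1 + g x ^ 2 := by positivity
  convert! ((hg.fun_pow 2).const_add 1).sqrt hpos.ne' using 1
  field_simp
  ring

/-- The density `√(1 + R'²) / R` of the isothermal coordinate along the meridians of the surface of
revolution with radius profile `R`: meridian arc length divided by the radius. -/
noncomputable def isothermalDensity (R : ℝ → ℝ) (x : ℝ) : ℝ :=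
  √(1 + deriv R x ^ 2) / R x

/-- The coefficient `w` of the reduced equation `s'' + w s' + w = 0` on the surface of revolution
with radius profile `R`; it is minus the logarithmic derivative of `isothermalDensity R`. -/
noncomputable def revolutionDrift (R : ℝ → ℝ) (x : ℝ) : ℝ :=
  deriv R x * (1 - R x * deriv (deriv R) x + deriv R x ^ 2) / (R x * (1 + deriv R x ^ 2))

section SurfaceOfRevolution

variable {R : ℝ → ℝ}

theorem isothermalDensity_pos {x : ℝ} (hpos : 0 < R x) : 0 < isothermalDensity R x :=
  div_pos (Real.sqrt_pos.2 (by positivity)) hpos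

theorem periodic_isothermalDensity {T : ℝ} (hper : Function.Periodic R T) :
    Function.Periodic (isothermalDensity R) T := fun x => by
  simp only [isothermalDensity, hper x, periodic_deriv hper x]

theorem hasDerivAt_isothermalDensity {x : ℝ} (hR : DifferentiableAt ℝ R x)
    (hR' : DifferentiableAt ℝ (deriv R) x) (hne : R x ≠ 0) :
    HasDerivAt (isothermalDensity R) (-(revolutionDrift R x * isothermalDensity R x)) x := by
  have hsq : √(1 + deriv R x ^ 2) ^ 2 = 1 + deriv R x ^ 2 := Real.sq_sqrt (by positivity)
  convert! (hasDerivAt_sqrt_one_add_sq hR'.hasDerivAt).fun_div hR.hasDerivAt hne using 1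
  simp only [revolutionDrift, isothermalDensity]
  field_simp
  rw [hsq]
  ring

theorem revolution_ode_solution_general (hR : Differentiable ℝ R)
    (hR' : Differentiable ℝ (deriv R)) {T : ℝ} (hT : 0 < T) (hper : Function.Periodic R T)
    (hpos : ∀ x, 0 < R x) {a c : ℝ}
    (hc : c = T * (∫ x in a..a + T, isothermalDensity R x)⁻¹) {x₀ : ℝ} {s : ℝ → ℝ}
    (hs : ∀ x, s x = ∫ t in x₀..x, (c * isothermalDensity R t - 1)) :
    Function.Periodic s T ∧
      ∀ x, deriv (deriv s) x + revolutionDrift R x * deriv s x + revolutionDrift R x = 0 := by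
  have hderiv : ∀ x, HasDerivAt (isothermalDensity R)
      (-(revolutionDrift R x * isothermalDensity R x)) x :=
    fun x => hasDerivAt_isothermalDensity (hR x) (hR' x) (hpos x).ne'
  have hcont : Continuous (isothermalDensity R) :=
    continuous_iff_continuousAt.2 fun x => (hderiv x).continuousAt
  have hint : ∫ x in a..a + T, isothermalDensity R x ≠ 0 :=
    (intervalIntegral_pos_of_pos (hcont.intervalIntegrable _ _)
      (fun x => isothermalDensity_pos (hpos x)) (lt_add_of_pos_right a hT)).ne'
  have hmean : ∫ x in a..a + T, (c * isothermalDensity R x - 1) = 0 := by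
    simpa only [hc, add_sub_cancel_left] using
      integral_mul_inv_integral_mul_sub_one (hcont.intervalIntegrable _ _) hint
  have hper_integrand : Function.Periodic (fun x => c * isothermalDensity R x - 1) T :=
    (periodic_isothermalDensity hper).comp fun y => c * y - 1
  obtain rfl : s = fun x => ∫ t in x₀..x, (c * isothermalDensity R t - 1) := funext hs
  exact ⟨periodic_integral_of_integral_eq_zero hper_integrand
      (fun _ _ => Continuous.intervalIntegrable (by fun_prop) _ _) hmean x₀,
    deriv_deriv_integral_add_mul_deriv_add_eq_zero hderiv c x₀⟩

end SurfaceOfRevolution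

/-- For a positive, 2-periodic, `C²` radius profile `R`, the function
`s(x) = ∫₁ˣ (c₃ √(1+R'(ζ)²)/R(ζ) − 1) dζ` with
`c₃ = 2 (∫_{−1}^{1} √(1+R'²)/R)⁻¹` is 2-periodic and solves
`s'' + w s' + w = 0`, where `w = R'(1 − R R'' + R'²)/(R (1 + R'²))`. -/
theorem revolution_ode_solution
    (R : ℝ → ℝ) (hR : ContDiff ℝ 2 R) (hper : ∀ x, R (x + 2) = R x) (hpos : ∀ x, 0 < R x)
    (c₃ : ℝ)
    (hc₃ : c₃ = 2 * (∫ x in (-1 : ℝ)..1, Real.sqrt (1 + (deriv R x) ^ 2) / R x)⁻¹)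
    (s w : ℝ → ℝ)
    (hs : ∀ x, s x = ∫ ζ in (1 : ℝ)..x, (c₃ * Real.sqrt (1 + (deriv R ζ) ^ 2) / R ζ - 1))
    (hw : ∀ x, w x = deriv R x * (1 - R x * deriv (deriv R) x + (deriv R x) ^ 2) /
      (R x * (1 + (deriv R x) ^ 2))) :
    (∀ x, s (x + 2) = s x) ∧
    (∀ x, deriv (deriv s) x + w x * deriv s x + w x = 0) := by
  obtain rfl : w = revolutionDrift R := funext hw
  exact revolution_ode_solution_general (a := -1) (c := c₃) (hR.differentiable two_ne_zero)
    hR.differentiable_deriv_two two_pos hper hpos (by norm_num [hc₃, isothermalDensity])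
    (by simpa only [isothermalDensity, mul_div_assoc] using hs)
end

section
/- Let R : ℝ → ℝ be twice continuously differentiable, 2-periodic, and strictly positive. With c₃ = 2·(∫_{−1}^{1} √(1+R'(x)²)/R(x) dx)⁻¹ and s(x) = ∫_{1}^{x} (c₃·√(1+R'(ζ)²)/R(ζ) − 1) dζ, the following identity holds: (∫_{−1}^{1} (1 + s'(x))² · R(x) / √(1+R'(x)²) dx) / (∫_{−1}^{1} R(x)·√(1+R'(x)²) dx) = 4 · (∫_{−1}^{1} √(1+R'(x)²)/R(x) dx · ∫_{−1}^{1} R(x)·√(1+R'(x)²) dx)⁻¹. -/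
open MeasureTheory intervalIntegral

/-!
The slice of the surface at `x` has resistance density `ρ = √(1 + R'²) / R`, up to a constant
factor, and the slices are connected in series. The corrector `s` makes the flux `(1 + s') / ρ`
equal to the constant `c₃`, so the energy density `(1 + s')² / ρ` is `c₃² ρ`. The choice of `c₃`
makes `s` periodic, i.e. `c₃ ∫ ρ` is the period length `2`, and the total energy is therefore
`4 / ∫ ρ`.
-/

open Set Filter
open scoped Topology Interval

lemma ae_hasDerivAt_of_eq_integral {E : Type*} [NormedAddCommGroup E] [NormedSpace ℝ E]
    [CompleteSpace E] {f F : ℝ → E} {a b x₀ : ℝ} (hf : IntervalIntegrable f volume a b)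
    (hx₀ : x₀ ∈ [[a, b]]) (hF : ∀ x ∈ [[a, b]], F x = ∫ t in x₀..x, f t) :
    ∀ᵐ x, x ∈ Ι a b → HasDerivAt F (f x) x := by
  filter_upwards [hf.ae_hasDerivAt_integral, volume.ae_ne (a ⊔ b)] with x hderiv hne hx
  have hnhds : [[a, b]] ∈ 𝓝 x := Icc_mem_nhds hx.1 (lt_of_le_of_ne hx.2 hne)
  exact (hderiv (uIoc_subset_uIcc hx) x₀ hx₀).congr_of_eventuallyEq
    (eventually_of_mem hnhds hF)

section SeriesResistance

variable {ρ s : ℝ → ℝ} {a b x₀ c : ℝ}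

lemma integral_one_add_deriv_sq_div (hρ : IntervalIntegrable ρ volume a b)
    (hx₀ : x₀ ∈ [[a, b]]) (hs : ∀ x ∈ [[a, b]], s x = ∫ t in x₀..x, (c * ρ t - 1)) :
    ∫ x in a..b, (1 + deriv s x) ^ 2 / ρ x = c ^ 2 * ∫ x in a..b, ρ x := by
  rw [← intervalIntegral.integral_const_mul]
  have hderiv := ae_hasDerivAt_of_eq_integral ((hρ.const_mul c).sub intervalIntegrable_const) hx₀ hs
  refine integral_congr_ae (hderiv.mono fun x hx hmem ↦ ?_)
  calc (1 + deriv s x) ^ 2 / ρ x = (c * ρ x) ^ 2 / ρ x := by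
        rw [(hx hmem).deriv, add_sub_cancel]
    _ = c ^ 2 * (ρ x * ρ x / ρ x) := by ring
    _ = c ^ 2 * ρ x := by rw [mul_self_div_self]

lemma integral_one_add_deriv_sq_div_eq_sq_div_integral (hρ : IntervalIntegrable ρ volume a b)
    (hρ₀ : ∫ x in a..b, ρ x ≠ 0) (hx₀ : x₀ ∈ [[a, b]]) (hc : c = (b - a) * (∫ x in a..b, ρ x)⁻¹)
    (hs : ∀ x ∈ [[a, b]], s x = ∫ t in x₀..x, (c * ρ t - 1)) :
    ∫ x in a..b, (1 + deriv s x) ^ 2 / ρ x = (b - a) ^ 2 / ∫ x in a..b, ρ x := by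
  rw [integral_one_add_deriv_sq_div hρ hx₀ hs, hc]
  field_simp

end SeriesResistance

lemma intervalIntegrable_sqrt_one_add_sq {f : ℝ → ℝ} {μ : Measure ℝ} [IsLocallyFiniteMeasure μ]
    {a b : ℝ} (hf : IntervalIntegrable f μ a b) :
    IntervalIntegrable (fun x ↦ √(1 + f x ^ 2)) μ a b := by
  have hbound : IntervalIntegrable (fun x ↦ 1 + |f x|) μ a b := intervalIntegrable_const.add hf.abs
  have hcont : Continuous fun y : ℝ ↦ √(1 + y ^ 2) := by fun_prop
  refine hbound.mono_fun' (hcont.comp_aestronglyMeasurable hf.def'.aestronglyMeasurable)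
    (ae_of_all _ fun x ↦ ?_)
  simpa [abs_of_nonneg (Real.sqrt_nonneg _)] using sqrt_one_add_norm_sq_le (f x)

lemma intervalIntegrable_sqrt_one_add_deriv_sq_div {R : ℝ → ℝ} {a b : ℝ}
    (hR : AbsolutelyContinuousOnInterval R a b) (hR₀ : ∀ x ∈ [[a, b]], R x ≠ 0) :
    IntervalIntegrable (fun x ↦ √(1 + deriv R x ^ 2) / R x) volume a b := by
  simpa only [div_eq_mul_inv, Pi.inv_apply] using
    (intervalIntegrable_sqrt_one_add_sq hR.intervalIntegrable_deriv).mul_continuousOn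
      (hR.continuousOn.inv₀ hR₀)

theorem revolution_adc_value_general {R s : ℝ → ℝ} {a b x₀ c : ℝ} (hab : a < b)
    (hR : AbsolutelyContinuousOnInterval R a b) (hpos : ∀ x ∈ Icc a b, 0 < R x)
    (hc : c = (b - a) * (∫ x in a..b, √(1 + deriv R x ^ 2) / R x)⁻¹) (hx₀ : x₀ ∈ Icc a b)
    (hs : ∀ x ∈ Icc a b, s x = ∫ t in x₀..x, (c * √(1 + deriv R t ^ 2) / R t - 1)) :
    (∫ x in a..b, (1 + deriv s x) ^ 2 * R x / √(1 + deriv R x ^ 2)) /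
        (∫ x in a..b, R x * √(1 + deriv R x ^ 2))
      = (b - a) ^ 2 * ((∫ x in a..b, √(1 + deriv R x ^ 2) / R x) *
          (∫ x in a..b, R x * √(1 + deriv R x ^ 2)))⁻¹ := by
  rw [← uIcc_of_le hab.le] at hpos hx₀ hs
  have hρ := intervalIntegrable_sqrt_one_add_deriv_sq_div hR fun x hx ↦ (hpos x hx).ne'
  have hρ_pos : 0 < ∫ x in a..b, √(1 + deriv R x ^ 2) / R x :=
    intervalIntegral_pos_of_pos_on hρ (fun x hx ↦
      div_pos (by positivity) (hpos x (Icc_subset_uIcc (Ioo_subset_Icc_self hx)))) hab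
  simp only [mul_div_assoc c] at hs
  have henergy := integral_one_add_deriv_sq_div_eq_sq_div_integral hρ hρ_pos.ne' hx₀ hc hs
  simp only [div_div_eq_mul_div] at henergy
  rw [henergy, div_div, div_eq_mul_inv]

/-- Computational form of the asymptotic directional conductivity of a surface of revolution:
with `c₃ = 2 (∫_{−1}^{1} √(1+R'²)/R)⁻¹` and `s(x) = ∫₁ˣ (c₃ √(1+R'(ζ)²)/R(ζ) − 1) dζ`,
the ratio `(∫_{−1}^{1} (1+s')² R/√(1+R'²)) / (∫_{−1}^{1} R √(1+R'²))` equals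
`4 (∫_{−1}^{1} √(1+R'²)/R · ∫_{−1}^{1} R √(1+R'²))⁻¹`. -/
theorem revolution_adc_value
    (R : ℝ → ℝ) (hR : ContDiff ℝ 2 R) (hper : ∀ x, R (x + 2) = R x) (hpos : ∀ x, 0 < R x)
    (c₃ : ℝ)
    (hc₃ : c₃ = 2 * (∫ x in (-1 : ℝ)..1, Real.sqrt (1 + (deriv R x) ^ 2) / R x)⁻¹)
    (s : ℝ → ℝ)
    (hs : ∀ x, s x = ∫ ζ in (1 : ℝ)..x, (c₃ * Real.sqrt (1 + (deriv R ζ) ^ 2) / R ζ - 1)) :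
    (∫ x in (-1 : ℝ)..1, (1 + deriv s x) ^ 2 * R x / Real.sqrt (1 + (deriv R x) ^ 2)) /
        (∫ x in (-1 : ℝ)..1, R x * Real.sqrt (1 + (deriv R x) ^ 2))
      = 4 * ((∫ x in (-1 : ℝ)..1, Real.sqrt (1 + (deriv R x) ^ 2) / R x) *
          (∫ x in (-1 : ℝ)..1, R x * Real.sqrt (1 + (deriv R x) ^ 2)))⁻¹ := by
  simpa only [show (1 : ℝ) - -1 = 2 by norm_num, show (2 : ℝ) ^ 2 = 4 by norm_num] using
    revolution_adc_value_general (a := -1) (b := 1) (by norm_num)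
      (hR.of_le one_le_two).contDiffOn.absolutelyContinuousOnInterval (fun x _ ↦ hpos x)
      (by convert hc₃ using 2; norm_num) (by norm_num) (fun x _ ↦ hs x)
end
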